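/- Moment asymptotics of the Green's function second derivatives: For the Green's function G of ε²∂_x⁴ − b∂_x² + c on (0,1) with clamped boundary conditions and constant coefficients, as ε → 0 one has ∫₀¹G_{xx}(1,t)dt = ((e−1)/(e+1))ε^{−1} + O(1), ∫₀¹G_{xx}(1,t)t dt = (2/(e²−1))ε^{−1} + O(1), ∫₀¹G_{xx}(1,t)t² dt = ((e²−4e+5)/(e²−1))ε^{−1} + O(1), ∫₀¹G_{xx}(1,t)t³ dt = ((16−2e²)/(e²−1))ε^{−1} + O(1), and moreover ∫₀¹G_{xxx}(1,t)t^k dt = ε^{−1}(∫₀¹G_{xx}(1,t)t^k dt + O(1)) and ∫₀¹G_{xxx}(0,t)t^k dt = −ε^{−1}(∫₀¹G_{xx}(0,t)t^k dt + O(1)) for k ∈ {0,1,2,3}. -/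

import Mathlib

open Set

/-- `g` solves the homogeneous constant-coefficient equation
`ε²g⁗ - b g'' + c g = 0` on all of `ℝ`. -/
def GreenODE (ε b c : ℝ) (g : ℝ → ℝ) : Prop :=
  ∀ x : ℝ, ε^2 * iteratedDeriv 4 g x - b * iteratedDeriv 2 g x + c * g x = 0

/-- Solution of `ε²z⁗ = z'' - z` with its derivatives. -/
def GSol (ε : ℝ) (z z1 z2 z3 : ℝ → ℝ) : Prop :=
  ∀ x, HasDerivAt z (z1 x) x ∧ HasDerivAt z1 (z2 x) x ∧ HasDerivAt z2 (z3 x) x ∧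
    HasDerivAt z3 ((z2 x - z x) / ε ^ 2) x

lemma GSol.lin {ε : ℝ} {z z1 z2 z3 y y1 y2 y3 : ℝ → ℝ} (hz : GSol ε z z1 z2 z3)
    (hy : GSol ε y y1 y2 y3) (a b : ℝ) :
    GSol ε (fun x => a * z x + b * y x) (fun x => a * z1 x + b * y1 x)
      (fun x => a * z2 x + b * y2 x) (fun x => a * z3 x + b * y3 x) := by
  intro x
  obtain ⟨h0, h1, h2, h3⟩ := hz x
  obtain ⟨k0, k1, k2, k3⟩ := hy x
  refine ⟨(h0.const_mul a).add (k0.const_mul b), (h1.const_mul a).add (k1.const_mul b),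
    (h2.const_mul a).add (k2.const_mul b), ?_⟩
  refine ((h3.const_mul a).add (k3.const_mul b)).congr_deriv ?_
  ring

lemma GSol.exp {ε m : ℝ} (hε : 0 < ε) (hm : ε ^ 2 * m ^ 4 = m ^ 2 - 1) :
    GSol ε (fun x => Real.exp (m * x)) (fun x => m * Real.exp (m * x))
      (fun x => m ^ 2 * Real.exp (m * x)) (fun x => m ^ 3 * Real.exp (m * x)) := by
  intro x
  have h : HasDerivAt (fun x => Real.exp (m * x)) (m * Real.exp (m * x)) x := by
    have := ((hasDerivAt_id x).const_mul m).exp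
    simp only [id, mul_one] at this
    rw [mul_comm]; exact this
  refine ⟨h, ?_, ?_, ?_⟩
  · exact (h.const_mul m).congr_deriv (by ring)
  · exact (h.const_mul (m ^ 2)).congr_deriv (by ring)
  · refine (h.const_mul (m ^ 3)).congr_deriv ?_
    field_simp
    linear_combination hm

lemma GSol.refl {ε : ℝ} {z z1 z2 z3 : ℝ → ℝ} (hz : GSol ε z z1 z2 z3) :
    GSol ε (fun x => z (1 - x)) (fun x => - z1 (1 - x)) (fun x => z2 (1 - x))
      (fun x => - z3 (1 - x)) := by
  intro x
  obtain ⟨h0, h1, h2, h3⟩ := hz (1 - x)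
  have hr : HasDerivAt (fun x : ℝ => 1 - x) (-1) x := by
    simpa using (hasDerivAt_id x).const_sub 1
  refine ⟨(h0.comp x hr).congr_deriv (by ring), (h1.comp x hr).neg.congr_deriv (by ring),
    (h2.comp x hr).congr_deriv (by ring), (h3.comp x hr).neg.congr_deriv (by ring)⟩

lemma GSol.const {ε : ℝ} (hε : 0 < ε) {z z1 z2 z3 y y1 y2 y3 : ℝ → ℝ} (hz : GSol ε z z1 z2 z3)
    (hy : GSol ε y y1 y2 y3) (s t : ℝ) :
    ε ^ 2 * (z s * y3 s - z1 s * y2 s + z2 s * y1 s - z3 s * y s) - (z s * y1 s - z1 s * y s)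
    = ε ^ 2 * (z t * y3 t - z1 t * y2 t + z2 t * y1 t - z3 t * y t)
      - (z t * y1 t - z1 t * y t) := by
  have key : ∀ x, HasDerivAt (fun x => ε ^ 2 * (z x * y3 x - z1 x * y2 x + z2 x * y1 x - z3 x * y x)
      - (z x * y1 x - z1 x * y x)) 0 x := by
    intro x
    obtain ⟨h0, h1, h2, h3⟩ := hz x
    obtain ⟨k0, k1, k2, k3⟩ := hy x
    refine (((((h0.mul k3).sub (h1.mul k2)).add (h2.mul k1)).sub (h3.mul k0)).const_mul
      (ε ^ 2) |>.sub ((h0.mul k1).sub (h1.mul k0))).congr_deriv ?_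
    field_simp
    ring
  exact is_const_of_deriv_eq_zero (fun x => (key x).differentiableAt) (fun x => (key x).deriv) s t

lemma GSol.of_ode {ε : ℝ} (hε : 0 < ε) {g : ℝ → ℝ} (hg : ContDiff ℝ (⊤:ℕ∞) g)
    (ho : GreenODE ε 1 1 g) :
    GSol ε g (deriv g) (iteratedDeriv 2 g) (iteratedDeriv 3 g) := by
  have hd : ∀ n : ℕ, ∀ x, HasDerivAt (iteratedDeriv n g) (iteratedDeriv (n + 1) g x) x := by
    intro n x
    rw [iteratedDeriv_succ]
    refine DifferentiableAt.hasDerivAt ?_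
    exact (hg.differentiable_iteratedDeriv n (by exact_mod_cast WithTop.coe_lt_top n)) x
  intro x
  have h0 := hd 0 x
  have h1 := hd 1 x
  simp only [iteratedDeriv_zero, iteratedDeriv_one, zero_add] at h0 h1
  refine ⟨h0, h1, hd 2 x, (hd 3 x).congr_deriv ?_⟩
  have := ho x
  field_simp
  norm_num
  linarith

lemma greenRight {ε t : ℝ} (hε : 0 < ε) {z z1 z2 z3 g g1 g2 g3 h h1 h2 h3 : ℝ → ℝ}
    (hz : GSol ε z z1 z2 z3) (hg : GSol ε g g1 g2 g3) (hh : GSol ε h h1 h2 h3)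
    (z0 : z 0 = 0) (z10 : z1 0 = 0) (g0 : g 0 = 0) (g10 : g1 0 = 0) (hh1 : h 1 = 0)
    (h11 : h1 1 = 0) (e0 : g t = h t) (e1 : g1 t = h1 t) (e2 : g2 t = h2 t)
    (e3 : h3 t - g3 t = 1 / ε ^ 2) :
    z t = ε ^ 2 * (z 1 * h3 1 - z1 1 * h2 1) := by
  have a := hz.const hε hg 0 t
  have b := hz.const hε hh 1 t
  simp only [z0, z10, g0, g10, hh1, h11] at a b
  have e3' : h3 t = g3 t + 1 / ε ^ 2 := by linarith
  rw [e3'] at b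
  rw [e0, e1, e2] at a
  have : ε ^ 2 * (z t * (g3 t + 1 / ε ^ 2)) = ε ^ 2 * (z t * g3 t) + z t := by field_simp
  linarith

lemma greenLeft {ε t : ℝ} (hε : 0 < ε) {z z1 z2 z3 g g1 g2 g3 h h1 h2 h3 : ℝ → ℝ}
    (hz : GSol ε z z1 z2 z3) (hg : GSol ε g g1 g2 g3) (hh : GSol ε h h1 h2 h3)
    (z0 : z 1 = 0) (z10 : z1 1 = 0) (g0 : g 0 = 0) (g10 : g1 0 = 0) (hh1 : h 1 = 0)
    (h11 : h1 1 = 0) (e0 : g t = h t) (e1 : g1 t = h1 t) (e2 : g2 t = h2 t)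
    (e3 : h3 t - g3 t = 1 / ε ^ 2) :
    z t = - ε ^ 2 * (z 0 * g3 0 - z1 0 * g2 0) := by
  have a := hz.const hε hg 0 t
  have b := hz.const hε hh 1 t
  simp only [z0, z10, g0, g10, hh1, h11] at a b
  have e3' : h3 t = g3 t + 1 / ε ^ 2 := by linarith
  rw [e3'] at b
  rw [e0, e1, e2] at a
  have : ε ^ 2 * (z t * (g3 t + 1 / ε ^ 2)) = ε ^ 2 * (z t * g3 t) + z t := by field_simp
  linarith

/-- The slow root. -/
lemma exists_root {ε : ℝ} (hε : 0 < ε) (h : ε ≤ 1 / 1000) :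
    ∃ q : ℝ, 1 ≤ q ∧ q ≤ 1 + 2 * ε ^ 2 ∧ ε ^ 2 * q ^ 4 = q ^ 2 - 1 := by
  have hc : ContinuousOn (fun q : ℝ => q ^ 2 - 1 - ε ^ 2 * q ^ 4) (Icc 1 (1 + 2 * ε ^ 2)) := by
    fun_prop
  have he : 0 < ε ^ 2 := by positivity
  have he2 : ε ^ 2 ≤ 1 / 100 := by nlinarith
  have := intermediate_value_Icc (by linarith) hc
  obtain ⟨q, hq, hq2⟩ := this (show (0:ℝ) ∈ _ by
    constructor
    · nlinarith
    · have : (1 + 2 * ε ^ 2) ^ 4 ≤ 2 := by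
        calc (1 + 2 * ε ^ 2) ^ 4 ≤ (1 + 2 * (1 / 100)) ^ 4 := by gcongr
          _ ≤ 2 := by norm_num
      nlinarith)
  refine ⟨q, hq.1, hq.2, ?_⟩
  simp only at hq2
  linarith

lemma layer_bound {ε K : ℝ} (hε : 0 < ε) (hK : 0 ≤ K) {h m : ℝ → ℝ}
    (hb : ∀ t ∈ Icc (0:ℝ) 1, |h t| ≤ K * (ε ^ 2 + ε * Real.exp (-((1 - t) / (2 * ε)))))
    (hm : ∀ t ∈ Icc (0:ℝ) 1, |m t| ≤ 1) :
    |∫ t in (0:ℝ)..1, h t * m t| ≤ 3 * K * ε ^ 2 := by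
  have hd : ∀ t ∈ uIcc (0:ℝ) 1, HasDerivAt
      (fun t => K * (ε ^ 2 * t + 2 * ε ^ 2 * Real.exp (-((1 - t) / (2 * ε)))))
      (K * (ε ^ 2 + ε * Real.exp (-((1 - t) / (2 * ε))))) t := by
    intro t _
    have := ((((hasDerivAt_id t).const_sub 1).div_const (2 * ε)).neg).exp
    refine ((((hasDerivAt_id t).const_mul (ε ^ 2)).add
      (this.const_mul (2 * ε ^ 2))).const_mul K).congr_deriv ?_
    simp only [id]
    field_simp
    rfl
  have hi := intervalIntegral.integral_eq_sub_of_hasDerivAt hd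
    (Continuous.intervalIntegrable (by fun_prop) _ _)
  have := intervalIntegral.norm_integral_le_of_norm_le (a := (0:ℝ)) (b := 1) (μ := MeasureTheory.volume)
    (f := fun t => h t * m t)
    (g := fun t => K * (ε ^ 2 + ε * Real.exp (-((1 - t) / (2 * ε))))) (by norm_num)
    (Filter.Eventually.of_forall (fun t ht => by
      have ht' : t ∈ Icc (0:ℝ) 1 := ⟨ht.1.le, ht.2⟩
      rw [Real.norm_eq_abs, abs_mul]
      calc |h t| * |m t| ≤ |h t| * 1 := by gcongr; exact hm t ht'
        _ ≤ _ := by rw [mul_one]; exact hb t ht'))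
    (Continuous.intervalIntegrable (by fun_prop) _ _)
  rw [hi] at this
  rw [← Real.norm_eq_abs]
  refine this.trans ?_
  have : 0 ≤ K * ε ^ 2 * Real.exp (-((1 - 0) / (2 * ε))) := by positivity
  simp
  simp at this
  nlinarith

lemma abs_mul_le' {a b A B : ℝ} (ha : |a| ≤ A) (hb : |b| ≤ B) : |a * b| ≤ A * B := by
  rw [abs_mul]
  exact mul_le_mul ha hb (abs_nonneg _) ((abs_nonneg _).trans ha)

lemma exp_le_four {x : ℝ} (hx : x ≤ 1.01) : Real.exp x ≤ 4 := by
  have h1 : Real.exp x ≤ Real.exp 1 * Real.exp 0.01 := by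
    rw [← Real.exp_add]; exact Real.exp_le_exp.2 (by norm_num at *; linarith)
  have h2 := Real.exp_one_lt_d9
  have h3 := (abs_le.1 (Real.abs_exp_sub_one_le (x := 0.01) (by norm_num [abs_of_pos]))).2
  rw [abs_of_pos (by norm_num)] at h3
  have h4 := Real.exp_pos 0.01
  nlinarith [Real.exp_pos 1]

lemma sinh_bd {x : ℝ} (h0 : 0 ≤ x) (hx : x ≤ 1.01) :
    0 ≤ Real.sinh x ∧ Real.sinh x ≤ 2 ∧ 0 ≤ Real.cosh x ∧ Real.cosh x ≤ 4 := by
  have h1 := exp_le_four hx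
  have h2 : Real.exp (-x) ≤ 1 := Real.exp_le_one_iff.2 (by linarith)
  have h3 := Real.exp_pos (-x)
  refine ⟨Real.sinh_nonneg_iff.2 h0, ?_, (Real.cosh_pos x).le, ?_⟩
  · rw [Real.sinh_eq]; linarith
  · rw [Real.cosh_eq]; linarith

lemma sinh_pert {ε q t : ℝ} (hε : 0 < ε) (h : ε ≤ 1 / 1000) (hq1 : 1 ≤ q)
    (hq2 : q ≤ 1 + 2 * ε ^ 2) (ht : t ∈ Icc (0:ℝ) 1) :
    |Real.sinh (q * t) / q - Real.sinh t| ≤ 10 * ε := by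
  have hs : 0 ≤ (q - 1) * t := mul_nonneg (by linarith) ht.1
  have hs2 : (q - 1) * t ≤ ε := by
    have : (q - 1) * t ≤ (q - 1) * 1 := by
      apply mul_le_mul_of_nonneg_left ht.2; linarith
    nlinarith
  set s := (q - 1) * t with hsd
  have hqt : q * t = t + s := by rw [hsd]; ring
  have e1 := Real.abs_exp_sub_one_le (x := s) (by rw [abs_of_nonneg hs]; linarith)
  have e2 := Real.abs_exp_sub_one_le (x := -s) (by rw [abs_neg, abs_of_nonneg hs]; linarith)
  rw [abs_neg] at e2
  rw [abs_of_nonneg hs] at e1 e2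
  have e3 : |Real.exp t| ≤ 4 := by
    rw [abs_of_pos (Real.exp_pos _)]; exact exp_le_four (by norm_num; linarith [ht.2])
  have e4 : |Real.exp (-t)| ≤ 1 := by
    rw [abs_of_pos (Real.exp_pos _)]; exact Real.exp_le_one_iff.2 (by linarith [ht.1])
  have f1 := abs_mul_le' e3 e1
  have f2 := abs_mul_le' e4 e2
  have k1 : |Real.sinh (q * t) - Real.sinh t| ≤ 5 * s := by
    have : Real.sinh (q * t) - Real.sinh t = (Real.exp t * (Real.exp s - 1)
        - Real.exp (-t) * (Real.exp (-s) - 1)) / 2 := by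
      rw [hqt, Real.sinh_eq, Real.sinh_eq, Real.exp_add, neg_add, Real.exp_add]; ring
    rw [this]
    rw [abs_le] at *
    constructor <;> linarith [f1.1, f1.2, f2.1, f2.2]
  have hqt1 : q * t ≤ 1.01 := by
    rw [hqt]; norm_num; linarith [ht.2]
  obtain ⟨b1, b2, -, -⟩ := sinh_bd (mul_nonneg (by linarith) ht.1) hqt1
  have k2 : |Real.sinh (q * t) / q - Real.sinh (q * t)| ≤ 2 * ε := by
    have : Real.sinh (q * t) / q - Real.sinh (q * t) = - (Real.sinh (q * t) * ((q - 1) / q)) := by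
      field_simp; ring
    rw [this, abs_neg]
    refine abs_mul_le' (by rwa [abs_of_nonneg b1]) ?_
    rw [abs_of_nonneg (div_nonneg (by linarith) (by linarith))]
    rw [div_le_iff₀ (by linarith)]
    nlinarith
  rw [abs_le] at *
  constructor <;> linarith [k1.1, k1.2, k2.1, k2.2]

set_option maxHeartbeats 2000000 in
/-- Existence of the two adjoint test functions with the required bounds. -/
lemma exists_test {ε : ℝ} (hε : 0 < ε) (h : ε ≤ 1 / 1000) :
    ∃ w w1 w2 w3 z z1 z2 z3 : ℝ → ℝ, GSol ε w w1 w2 w3 ∧ GSol ε z z1 z2 z3 ∧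
      w 0 = 0 ∧ w1 0 = 0 ∧ w 1 = 0 ∧ w1 1 = 1 ∧ z 0 = 0 ∧ z1 0 = 0 ∧ z 1 = ε ∧ z1 1 = 1 ∧
      (∀ t ∈ Icc (0:ℝ) 1, |w t + ε * Real.sinh t / Real.sinh 1|
        ≤ 5000 * (ε ^ 2 + ε * Real.exp (-((1 - t) / (2 * ε))))) ∧
      (∀ t ∈ Icc (0:ℝ) 1, |z t| ≤ 5000 * (ε ^ 2 + ε * Real.exp (-((1 - t) / (2 * ε))))) := by
  obtain ⟨q, hq1, hq2, hq⟩ := exists_root hε h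
  have hq0 : 0 < q := by linarith
  have hee : ε * ε ≤ ε / 1000 := by nlinarith
  have hee0 : 0 < ε * ε := by positivity
  have hqs : q ≤ 1.01 := by norm_num; nlinarith
  obtain ⟨ρ, hρ⟩ : ∃ ρ, ρ = ε * q := ⟨_, rfl⟩
  have hρ0 : 0 < ρ := by rw [hρ]; positivity
  have hρ2 : ρ ≤ 2 * ε := by rw [hρ]; norm_num at hqs; nlinarith
  obtain ⟨p, hp⟩ : ∃ p, p = 1 / ρ := ⟨_, rfl⟩
  have hp0 : 0 < p := by rw [hp]; positivity
  have hpρ : p * ρ = 1 := by rw [hp]; field_simp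
  have hpr : ε ^ 2 * p ^ 4 = p ^ 2 - 1 := by
    rw [hp, hρ]; field_simp; linear_combination hq
  have hεp : ε * p = 1 / q := by rw [hp, hρ]; field_simp
  obtain ⟨E, hE⟩ : ∃ E, E = Real.exp (-p) := ⟨_, rfl⟩
  have hE0 : 0 < E := by rw [hE]; exact Real.exp_pos _
  have hEp : E * Real.exp p = 1 := by rw [hE, ← Real.exp_add]; simp
  have hexp := Real.quadratic_le_exp_of_nonneg hp0.le
  have hE1 : E ≤ 2 * ε := by
    have : E * p ≤ 1 := by rw [← hEp]; apply mul_le_mul_of_nonneg_left _ hE0.le; nlinarith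
    calc E = E * p * ρ := by rw [mul_assoc, hpρ, mul_one]
      _ ≤ 1 * ρ := by gcongr
      _ ≤ _ := by linarith
  obtain ⟨P, hP⟩ : ∃ P, P = p * E := ⟨_, rfl⟩
  have hP0 : 0 < P := by rw [hP]; positivity
  have hP1 : P ≤ 4 * ε := by
    have : E * (p ^ 2 / 2) ≤ 1 := by
      rw [← hEp]; apply mul_le_mul_of_nonneg_left _ hE0.le; nlinarith
    calc P = 2 * (E * (p ^ 2 / 2)) * ρ := by rw [hP]; linear_combination (-p*E) * hpρ
      _ ≤ 2 * 1 * ρ := by gcongr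
      _ ≤ _ := by linarith
  -- basis
  have sp := GSol.exp hε hpr
  have sn := GSol.exp (m := -p) hε (by linear_combination hpr)
  have sq := GSol.exp hε hq
  have sm := GSol.exp (m := -q) hε (by linear_combination hq)
  have sN := (sp.lin sn E (-E)).lin (sq.lin sm (-P / q) (P / q)) 1 1
  have sD := (sn.lin (sq.lin sm (1 / (2 * q) - ρ / 2) (-1 / (2 * q) - ρ / 2)) ρ 1)
  obtain ⟨N, hN⟩ : ∃ N : ℝ → ℝ, N = fun x => 1 * (E * Real.exp (p * x) + -E * Real.exp (-p * x))
    + 1 * (-P / q * Real.exp (q * x) + P / q * Real.exp (-q * x)) := ⟨_, rfl⟩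
  obtain ⟨N1, hN1⟩ : ∃ N : ℝ → ℝ, N = fun x => 1 * (E * (p * Real.exp (p * x)) +
    -E * (-p * Real.exp (-p * x)))
    + 1 * (-P / q * (q * Real.exp (q * x)) + P / q * (-q * Real.exp (-q * x))) := ⟨_, rfl⟩
  obtain ⟨D, hD⟩ : ∃ D : ℝ → ℝ, D = fun x => ρ * Real.exp (-p * x) +
    1 * ((1 / (2 * q) - ρ / 2) * Real.exp (q * x)
      + (-1 / (2 * q) - ρ / 2) * Real.exp (-q * x)) := ⟨_, rfl⟩
  obtain ⟨D1, hD1⟩ : ∃ D : ℝ → ℝ, D = fun x => ρ * (-p * Real.exp (-p * x)) +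
    1 * ((1 / (2 * q) - ρ / 2) * (q * Real.exp (q * x))
      + (-1 / (2 * q) - ρ / 2) * (-q * Real.exp (-q * x))) := ⟨_, rfl⟩
  rw [← hN, ← hN1] at sN
  rw [← hD, ← hD1] at sD
  have N0 : N 0 = 0 := by rw [hN]; simp; ring
  have N10 : N1 0 = 0 := by rw [hN1]; simp; field_simp; rw [hP]; ring
  have D0 : D 0 = 0 := by rw [hD]; simp; ring
  have D10 : D1 0 = 0 := by
    rw [hD1]; simp; field_simp; linear_combination (-2) * hpρ
  have eN : ∀ t, N t = Real.exp (-(p * (1 - t))) - E * Real.exp (-(p * t))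
      - 2 * P * (Real.sinh (q * t) / q) := by
    intro t
    have : Real.exp (-(p * (1 - t))) = E * Real.exp (p * t) := by
      rw [hE, ← Real.exp_add]; congr 1; ring
    rw [this, hN, Real.sinh_eq]; simp only [neg_mul]; field_simp; ring
  have eD : ∀ t, D t = Real.sinh (q * t) / q - ρ * Real.cosh (q * t) + ρ * Real.exp (-(p * t)) := by
    intro t
    rw [hD, Real.sinh_eq, Real.cosh_eq]; simp only [neg_mul]; field_simp; ring
  have eN1 : N1 1 = p + p * E * E - 2 * P * Real.cosh q := by
    rw [hN1, Real.cosh_eq]; simp only [mul_one, ← hE]; field_simp; linear_combination p * hEp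
  have eD1 : D1 1 = Real.cosh q - ρ * q * Real.sinh q - E := by
    rw [hD1, Real.sinh_eq, Real.cosh_eq]; simp only [mul_one, ← hE]; field_simp
    linear_combination (-2 * E) * hpρ
  have bexp : ∀ t, 0 ≤ t → |Real.exp (-(p * t))| ≤ 1 := by
    intro t ht
    rw [abs_of_pos (Real.exp_pos _)]; exact Real.exp_le_one_iff.2 (by nlinarith)
  have aρ : |ρ| ≤ 2 * ε := by rwa [abs_of_pos hρ0]
  have aE : |E| ≤ 2 * ε := by rwa [abs_of_pos hE0]
  have aP : |P| ≤ 4 * ε := by rwa [abs_of_pos hP0]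
  have aε : |ε| ≤ ε := by rw [abs_of_pos hε]
  have bq : ∀ t ∈ Icc (0:ℝ) 1, |Real.sinh (q * t) / q| ≤ 2 ∧ |Real.cosh (q * t)| ≤ 4 := by
    intro t ht
    have h1 : q * t ≤ 1.01 := by nlinarith [ht.1, ht.2]
    obtain ⟨b1, b2, b3, b4⟩ := sinh_bd (mul_nonneg hq0.le ht.1) h1
    constructor
    · rw [abs_of_nonneg (by positivity), div_le_iff₀ hq0]; linarith
    · rwa [abs_of_nonneg b3]
  have hl : ∀ t ∈ Icc (0:ℝ) 1, Real.exp (-(p * (1 - t))) ≤ Real.exp (-((1 - t) / (2 * ε))) := by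
    intro t ht
    apply Real.exp_le_exp.2
    have : 1 / (2 * ε) ≤ p := by rw [hp]; exact one_div_le_one_div_of_le hρ0 hρ2
    have := mul_le_mul_of_nonneg_right this (sub_nonneg.2 ht.2)
    rw [div_eq_mul_one_div]; linarith
  have bN' : ∀ t ∈ Icc (0:ℝ) 1, |N t - Real.exp (-(p * (1 - t)))| ≤ 18 * ε := by
    intro t ht
    have f1 := abs_mul_le' aE (bexp t ht.1)
    have f2 := abs_mul_le' aP (bq t ht).1
    rw [eN t]
    rw [abs_le] at *
    constructor <;> linarith [f1.1, f1.2, f2.1, f2.2]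
  have bN : ∀ t ∈ Icc (0:ℝ) 1, |N t| ≤ 18 * ε + Real.exp (-((1 - t) / (2 * ε))) := by
    intro t ht
    have f1 := abs_le.1 (bN' t ht)
    have f2 := hl t ht
    have f3 := Real.exp_pos (-(p * (1 - t)))
    rw [abs_le]
    constructor <;> linarith [f1.1, f1.2]
  have n1b : |N 1 - 1| ≤ 18 * ε := by simpa using bN' 1 (by simp)
  have bD : ∀ t ∈ Icc (0:ℝ) 1, |D t - Real.sinh t| ≤ 20 * ε := by
    intro t ht
    have f1 := abs_mul_le' aρ (bexp t ht.1)
    have f2 := abs_mul_le' aρ (bq t ht).2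
    have f3 := sinh_pert hε h hq1 hq2 ht
    rw [eD t]
    rw [abs_le] at *
    constructor <;> linarith [f1.1, f1.2, f2.1, f2.2, f3.1, f3.2]
  have bs : ∀ t ∈ Icc (0:ℝ) 1, |Real.sinh t| ≤ 2 := by
    intro t ht
    obtain ⟨b1, b2, -, -⟩ := sinh_bd ht.1 (by norm_num; linarith [ht.2])
    rwa [abs_of_nonneg b1]
  have bD3 : ∀ t ∈ Icc (0:ℝ) 1, |D t| ≤ 3 := by
    intro t ht
    have f1 := abs_le.1 (bD t ht)
    have f2 := abs_le.1 (bs t ht)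
    rw [abs_le]; constructor <;> linarith [f1.1, f1.2, f2.1, f2.2]
  have h1m : (1:ℝ) ∈ Icc (0:ℝ) 1 := by simp
  obtain ⟨c1, c2⟩ := bq 1 h1m
  rw [mul_one] at c1 c2
  have bD1 : |D1 1| ≤ 6 := by
    have f1 : |Real.sinh q| ≤ 2 := by
      obtain ⟨b1, b2, -, -⟩ := sinh_bd hq0.le hqs
      rwa [abs_of_nonneg b1]
    have f2 := abs_mul_le' (abs_mul_le' aρ (show |q| ≤ 2 by
      rw [abs_of_pos hq0]; norm_num at hqs; linarith)) f1
    rw [eD1]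
    rw [abs_le] at *
    constructor <;> linarith [f2.1, f2.2]
  have bN1 : |ε * N1 1 - 1| ≤ 40 * ε := by
    have f0 : ε * N1 1 = 1 / q + (1 / q) * (E * E) - 2 * (ε * (P * Real.cosh q)) := by
      rw [eN1, ← hεp]; ring
    have f1 := abs_mul_le' aε (abs_mul_le' aP c2)
    have g1 : 1 / q ≤ 1 := by rw [div_le_iff₀ hq0]; linarith
    have g2 : 1 - ε ≤ 1 / q := by rw [le_div_iff₀ hq0]; nlinarith
    have f2 := abs_mul_le' (show |1 / q| ≤ 1 by rwa [abs_of_pos (by positivity)])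
      (abs_mul_le' aE aE)
    rw [f0]
    rw [abs_le] at *
    constructor <;> linarith [f1.1, f1.2, f2.1, f2.2]
  have bN1a : |N 1| ≤ 2 := by
    rw [abs_le] at *; constructor <;> linarith [n1b.1, n1b.2]
  have bD1a := bD3 1 h1m
  have s1 : 1 ≤ Real.sinh 1 := Real.self_le_sinh_iff.2 (by norm_num)
  obtain ⟨Δ, hΔ⟩ : ∃ Δ, Δ = N1 1 * D 1 - N 1 * D1 1 := ⟨_, rfl⟩
  have bT : |ε * Δ - Real.sinh 1| ≤ 160 * ε := by
    have f1 := abs_mul_le' bN1 bD1a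
    have f2 := bD 1 h1m
    have f3 := abs_mul_le' aε (abs_mul_le' bN1a bD1)
    have : ε * Δ - Real.sinh 1 = (ε * N1 1 - 1) * D 1 + (D 1 - Real.sinh 1)
      - ε * (N 1 * D1 1) := by rw [hΔ]; ring
    rw [this]
    rw [abs_le] at *
    constructor <;> linarith [f1.1, f1.2, f2.1, f2.2, f3.1, f3.2]
  have hT : 1 / 2 ≤ ε * Δ := by have := (abs_le.1 bT).1; linarith
  have hΔ0 : 0 < Δ := by
    exact pos_of_mul_pos_right (lt_of_lt_of_le (by norm_num) hT) hε.le
  have bi : |1 / Δ| ≤ 2 * ε := by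
    rw [abs_of_pos (by positivity), div_le_iff₀ hΔ0]; linarith
  have sw := sN.lin sD (1 / Δ * D 1) (-(1 / Δ * N 1))
  have sz := sN.lin sD (1 / Δ * (D 1 - ε * D1 1)) (1 / Δ * (ε * N1 1 - N 1))
  refine ⟨_, _, _, _, _, _, _, _, sw, sz, ?_, ?_, ?_, ?_, ?_, ?_, ?_, ?_, ?_, ?_⟩
  · simp [N0, D0]
  · simp [N10, D10]
  · ring
  · field_simp; rw [hΔ]; ring
  · simp [N0, D0]
  · simp [N10, D10]
  · field_simp; rw [hΔ]; ring
  · field_simp; rw [hΔ]; ring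
  · intro t ht
    have f1 := abs_mul_le' (abs_mul_le' bi bD1a) (bN t ht)
    have g1 := abs_mul_le' (bs t ht) bT
    have g2 := abs_mul_le' n1b (bD3 t ht)
    have g4 := bs 1 h1m
    have g3 : |Real.sinh t - N 1 * D t| ≤ 74 * ε := by
      have g5 := bD t ht
      have : Real.sinh t - N 1 * D t = -(D t - Real.sinh t) - (N 1 - 1) * D t := by ring
      rw [this]
      rw [abs_le] at *
      constructor <;> linarith [g5.1, g5.2, g2.1, g2.2]
    have g6 := abs_mul_le' g4 g3
    have g7 : |Real.sinh t * (ε * Δ - Real.sinh 1)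
        + Real.sinh 1 * (Real.sinh t - N 1 * D t)| ≤ 468 * ε := by
      refine (abs_add_le _ _).trans ?_
      linarith
    have g8 : |1 / Real.sinh 1| ≤ 1 := by
      rw [abs_of_pos (by positivity), div_le_iff₀ (by linarith)]; linarith
    have g9 := abs_mul_le' (abs_mul_le' bi g8) g7
    have : 1 / Δ * D 1 * N t + -(1 / Δ * N 1) * D t + ε * Real.sinh t / Real.sinh 1
      = 1 / Δ * D 1 * N t + 1 / Δ * (1 / Real.sinh 1) * (Real.sinh t * (ε * Δ - Real.sinh 1)
        + Real.sinh 1 * (Real.sinh t - N 1 * D t)) := by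
      have : Real.sinh 1 ≠ 0 := by positivity
      field_simp; ring
    rw [this]
    refine (abs_add_le _ _).trans ?_
    have := mul_pos hε (Real.exp_pos (-((1 - t) / (2 * ε))))
    linarith
  · intro t ht
    have u1 : |D 1 - ε * D1 1| ≤ 4 := by
      have := abs_mul_le' aε bD1
      rw [abs_le] at *
      constructor <;> linarith [this.1, this.2, bD1a.1, bD1a.2]
    have u2 : |ε * N1 1 - N 1| ≤ 58 * ε := by
      rw [abs_le] at *
      constructor <;> linarith [bN1.1, bN1.2, n1b.1, n1b.2]
    have f1 := abs_mul_le' (abs_mul_le' bi u1) (bN t ht)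
    have f2 := abs_mul_le' (abs_mul_le' bi u2) (bD3 t ht)
    refine (abs_add_le _ _).trans ?_
    have := mul_pos hε (Real.exp_pos (-((1 - t) / (2 * ε))))
    linarith

lemma sinh_moments :
    (∫ t in (0:ℝ)..1, Real.sinh t * t ^ 0) / Real.sinh 1 = (Real.exp 1 - 1) / (Real.exp 1 + 1) ∧
    (∫ t in (0:ℝ)..1, Real.sinh t * t ^ 1) / Real.sinh 1 = 2 / ((Real.exp 1) ^ 2 - 1) ∧
    (∫ t in (0:ℝ)..1, Real.sinh t * t ^ 2) / Real.sinh 1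
      = ((Real.exp 1) ^ 2 - 4 * Real.exp 1 + 5) / ((Real.exp 1) ^ 2 - 1) ∧
    (∫ t in (0:ℝ)..1, Real.sinh t * t ^ 3) / Real.sinh 1
      = (16 - 2 * (Real.exp 1) ^ 2) / ((Real.exp 1) ^ 2 - 1) := by
  have he : 2 < Real.exp 1 := by have := Real.exp_one_gt_d9; linarith
  have he0 : Real.exp 1 ≠ 0 := by positivity
  have he1 : Real.exp 1 + 1 ≠ 0 := by positivity
  have he2 : (Real.exp 1) ^ 2 - 1 ≠ 0 := by nlinarith
  have hs : Real.sinh 1 = ((Real.exp 1) ^ 2 - 1) / (2 * Real.exp 1) := by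
    rw [Real.sinh_eq, Real.exp_neg]; field_simp
  have hc : Real.cosh 1 = ((Real.exp 1) ^ 2 + 1) / (2 * Real.exp 1) := by
    rw [Real.cosh_eq, Real.exp_neg]; field_simp
  have I0 : ∫ t in (0:ℝ)..1, Real.sinh t * t ^ 0 = Real.cosh 1 - 1 := by
    rw [intervalIntegral.integral_eq_sub_of_hasDerivAt (f := fun t => Real.cosh t)]
    · simp
    · intro t _
      exact (Real.hasDerivAt_cosh t).congr_deriv (by ring)
    · exact Continuous.intervalIntegrable (by fun_prop) _ _
  have I1 : ∫ t in (0:ℝ)..1, Real.sinh t * t ^ 1 = Real.cosh 1 - Real.sinh 1 := by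
    rw [intervalIntegral.integral_eq_sub_of_hasDerivAt
      (f := fun t => t * Real.cosh t - Real.sinh t)]
    · simp
    · intro t _
      exact (((hasDerivAt_id t).mul (Real.hasDerivAt_cosh t)).sub
        (Real.hasDerivAt_sinh t)).congr_deriv (by simp only [id]; ring)
    · exact Continuous.intervalIntegrable (by fun_prop) _ _
  have I2 : ∫ t in (0:ℝ)..1, Real.sinh t * t ^ 2 = 3 * Real.cosh 1 - 2 * Real.sinh 1 - 2 := by
    rw [intervalIntegral.integral_eq_sub_of_hasDerivAt
      (f := fun t => (t ^ 2 + 2) * Real.cosh t - 2 * t * Real.sinh t)]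
    · simp only [Real.sinh_zero, Real.cosh_zero]; ring
    · intro t _
      exact ((((hasDerivAt_pow 2 t).add_const 2).mul (Real.hasDerivAt_cosh t)).sub
        (((hasDerivAt_id t).const_mul 2).mul
        (Real.hasDerivAt_sinh t))).congr_deriv (by simp only [id]; push_cast; ring)
    · exact Continuous.intervalIntegrable (by fun_prop) _ _
  have I3 : ∫ t in (0:ℝ)..1, Real.sinh t * t ^ 3 = 7 * Real.cosh 1 - 9 * Real.sinh 1 := by
    rw [intervalIntegral.integral_eq_sub_of_hasDerivAt
      (f := fun t => (t ^ 3 + 6 * t) * Real.cosh t - (3 * t ^ 2 + 6) * Real.sinh t)]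
    · simp only [Real.sinh_zero, Real.cosh_zero]; ring
    · intro t _
      exact ((((hasDerivAt_pow 3 t).add ((hasDerivAt_id t).const_mul 6)).mul
        (Real.hasDerivAt_cosh t)).sub
        ((((hasDerivAt_pow 2 t).const_mul 3).add_const 6).mul
        (Real.hasDerivAt_sinh t))).congr_deriv (by simp [id]; ring)
    · exact Continuous.intervalIntegrable (by fun_prop) _ _
  rw [I0, I1, I2, I3, hs, hc]
  refine ⟨?_, ?_, ?_, ?_⟩ <;> (field_simp; try ring)

lemma integral_congr_open {f g : ℝ → ℝ} (h : ∀ t ∈ Ioo (0:ℝ) 1, f t = g t) :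
    ∫ t in (0:ℝ)..1, f t = ∫ t in (0:ℝ)..1, g t := by
  rw [intervalIntegral.integral_of_le zero_le_one, intervalIntegral.integral_of_le zero_le_one,
    MeasureTheory.integral_Ioc_eq_integral_Ioo, MeasureTheory.integral_Ioc_eq_integral_Ioo]
  exact MeasureTheory.setIntegral_congr_fun measurableSet_Ioo h

lemma pow_bd (k : ℕ) : ∀ t ∈ Icc (0:ℝ) 1, |t ^ k| ≤ 1 := by
  intro t ht
  rw [abs_of_nonneg (pow_nonneg ht.1 k)]
  exact pow_le_one₀ ht.1 ht.2

lemma pow_bd' (k : ℕ) : ∀ t ∈ Icc (0:ℝ) 1, |(1 - t) ^ k| ≤ 1 := by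
  intro t ht
  exact pow_bd k (1 - t) ⟨by linarith [ht.2], by linarith [ht.1]⟩

/-- Moment asymptotics of the Green's function second derivatives (normalized
coefficients `b = c = 1`): as `ε → 0`,
`∫₀¹G_{xx}(1,t)dt = ((e-1)/(e+1))ε⁻¹ + O(1)`,
`∫₀¹G_{xx}(1,t)t dt = (2/(e²-1))ε⁻¹ + O(1)`,
`∫₀¹G_{xx}(1,t)t² dt = ((e²-4e+5)/(e²-1))ε⁻¹ + O(1)`,
`∫₀¹G_{xx}(1,t)t³ dt = ((16-2e²)/(e²-1))ε⁻¹ + O(1)`, and for `k ∈ {0,1,2,3}`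
`∫₀¹G_{xxx}(1,t)tᵏ dt = ε⁻¹(∫₀¹G_{xx}(1,t)tᵏ dt + O(1))` and
`∫₀¹G_{xxx}(0,t)tᵏ dt = -ε⁻¹(∫₀¹G_{xx}(0,t)tᵏ dt + O(1))`. -/
theorem green_function_moment_asymptotics :
    ∃ C > 0, ∃ ε₀ > 0, ∀ ε : ℝ, 0 < ε → ε ≤ ε₀ →
      ∀ G G₁ G₂ : ℝ → ℝ → ℝ,
      (∀ t ∈ Ioo (0:ℝ) 1, ContDiff ℝ (⊤:ℕ∞) (fun x => G₁ x t)
        ∧ ContDiff ℝ (⊤:ℕ∞) (fun x => G₂ x t)) →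
      (∀ t ∈ Ioo (0:ℝ) 1, GreenODE ε 1 1 (fun x => G₁ x t)
        ∧ GreenODE ε 1 1 (fun x => G₂ x t)) →
      (∀ t ∈ Ioo (0:ℝ) 1, G₁ 0 t = 0 ∧ deriv (fun x => G₁ x t) 0 = 0
        ∧ G₂ 1 t = 0 ∧ deriv (fun x => G₂ x t) 1 = 0) →
      (∀ t ∈ Ioo (0:ℝ) 1,
        G₁ t t = G₂ t t ∧
        deriv (fun x => G₁ x t) t = deriv (fun x => G₂ x t) t ∧
        iteratedDeriv 2 (fun x => G₁ x t) t = iteratedDeriv 2 (fun x => G₂ x t) t ∧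
        iteratedDeriv 3 (fun x => G₂ x t) t - iteratedDeriv 3 (fun x => G₁ x t) t
          = 1/ε^2) →
      (∀ x t : ℝ, G x t = if x < t then G₁ x t else G₂ x t) →
      |(∫ t in (0:ℝ)..1, iteratedDeriv 2 (fun x => G₂ x t) 1)
          - ((Real.exp 1 - 1)/(Real.exp 1 + 1)) / ε| ≤ C ∧
      |(∫ t in (0:ℝ)..1, iteratedDeriv 2 (fun x => G₂ x t) 1 * t)
          - (2/((Real.exp 1)^2 - 1)) / ε| ≤ C ∧
      |(∫ t in (0:ℝ)..1, iteratedDeriv 2 (fun x => G₂ x t) 1 * t^2)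
          - (((Real.exp 1)^2 - 4*Real.exp 1 + 5)/((Real.exp 1)^2 - 1)) / ε| ≤ C ∧
      |(∫ t in (0:ℝ)..1, iteratedDeriv 2 (fun x => G₂ x t) 1 * t^3)
          - ((16 - 2*(Real.exp 1)^2)/((Real.exp 1)^2 - 1)) / ε| ≤ C ∧
      (∀ k : ℕ, k ≤ 3 →
        |ε * (∫ t in (0:ℝ)..1, iteratedDeriv 3 (fun x => G₂ x t) 1 * t^k)
            - ∫ t in (0:ℝ)..1, iteratedDeriv 2 (fun x => G₂ x t) 1 * t^k| ≤ C) ∧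
      (∀ k : ℕ, k ≤ 3 →
        |ε * (∫ t in (0:ℝ)..1, iteratedDeriv 3 (fun x => G₁ x t) 0 * t^k)
            + ∫ t in (0:ℝ)..1, iteratedDeriv 2 (fun x => G₁ x t) 0 * t^k| ≤ C) := by
  refine ⟨15000, by norm_num, 1 / 1000, by norm_num, ?_⟩
  intro ε hε hε1 G G₁ G₂ hsm hode hbc hjump _
  obtain ⟨w, w1, w2, w3, z, z1, z2, z3, hw, hz, w0, w10, w_1, w11, z0, z10, z_1, z11, bw, bz⟩ :=
    exists_test hε hε1
  have cw : Continuous w := continuous_iff_continuousAt.2 fun x => (hw x).1.continuousAt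
  have cz : Continuous z := continuous_iff_continuousAt.2 fun x => (hz x).1.continuousAt
  have hε2 : 0 < ε ^ 2 := by positivity
  have key : ∀ t ∈ Ioo (0:ℝ) 1,
      iteratedDeriv 2 (fun x => G₂ x t) 1 = - w t / ε ^ 2 ∧
      iteratedDeriv 3 (fun x => G₂ x t) 1 = (z t - w t) / ε ^ 3 ∧
      iteratedDeriv 2 (fun x => G₁ x t) 0 = - w (1 - t) / ε ^ 2 ∧
      iteratedDeriv 3 (fun x => G₁ x t) 0 = (w (1 - t) - z (1 - t)) / ε ^ 3 := by
    intro t ht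
    have s1 := GSol.of_ode hε (hsm t ht).1 (hode t ht).1
    have s2 := GSol.of_ode hε (hsm t ht).2 (hode t ht).2
    obtain ⟨b1, b2, b3, b4⟩ := hbc t ht
    obtain ⟨j1, j2, j3, j4⟩ := hjump t ht
    have r1 := greenRight hε hw s1 s2 w0 w10 b1 b2 b3 b4 j1 j2 j3 j4
    have r2 := greenRight hε hz s1 s2 z0 z10 b1 b2 b3 b4 j1 j2 j3 j4
    have r3 := greenLeft hε hw.refl s1 s2 (by simp [w0]) (by simp [w10]) b1 b2 b3 b4 j1 j2 j3 j4
    have r4 := greenLeft hε hz.refl s1 s2 (by simp [z0]) (by simp [z10]) b1 b2 b3 b4 j1 j2 j3 j4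
    simp only [sub_zero, w_1, w11, z_1, z11] at r1 r2 r3 r4
    refine ⟨?_, ?_, ?_, ?_⟩
    · rw [r1]; field_simp; ring
    · rw [r1, r2]; field_simp; ring
    · rw [r3]; field_simp; ring
    · rw [r3, r4]; field_simp; ring
  have right : ∀ k : ℕ, |(∫ t in (0:ℝ)..1, iteratedDeriv 2 (fun x => G₂ x t) 1 * t ^ k)
      - ((∫ t in (0:ℝ)..1, Real.sinh t * t ^ k) / Real.sinh 1) / ε| ≤ 15000 := by
    intro k
    have s0 : Real.sinh 1 ≠ 0 := (Real.sinh_pos_iff.2 one_pos).ne'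
    have hb := layer_bound hε (by norm_num) bw (pow_bd k)
    rw [integral_congr_open (g := fun t => (1 / (ε * Real.sinh 1)) * (Real.sinh t * t ^ k)
      - (1 / ε ^ 2) * ((w t + ε * Real.sinh t / Real.sinh 1) * t ^ k)) (by
        intro t ht
        simp only [(key t ht).1]
        field_simp; ring)]
    rw [intervalIntegral.integral_sub (Continuous.intervalIntegrable (by fun_prop) _ _)
      (Continuous.intervalIntegrable (by fun_prop) _ _),
      intervalIntegral.integral_const_mul, intervalIntegral.integral_const_mul]
    set I := ∫ t in (0:ℝ)..1, Real.sinh t * t ^ k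
    set J := ∫ t in (0:ℝ)..1, (w t + ε * Real.sinh t / Real.sinh 1) * t ^ k
    have : 1 / (ε * Real.sinh 1) * I - 1 / ε ^ 2 * J - I / Real.sinh 1 / ε = - (J / ε ^ 2) := by
      field_simp; ring
    rw [this, abs_neg, abs_div, abs_of_pos hε2, div_le_iff₀ hε2]
    linarith
  obtain ⟨m0, m1, m2, m3⟩ := sinh_moments
  refine ⟨?_, ?_, ?_, ?_, ?_, ?_⟩
  · have := right 0
    rw [m0] at this
    simpa only [pow_zero, mul_one] using this
  · have := right 1
    rw [m1] at this
    simpa only [pow_one] using this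
  · have := right 2
    rwa [m2] at this
  · have := right 3
    rwa [m3] at this
  · intro k _
    have hb := layer_bound hε (by norm_num) bz (pow_bd k)
    rw [integral_congr_open (f := fun t => iteratedDeriv 3 (fun x => G₂ x t) 1 * t ^ k)
        (g := fun t => (z t - w t) / ε ^ 3 * t ^ k) (by
        intro t ht
        simp only [(key t ht).2.1]),
      integral_congr_open (f := fun t => iteratedDeriv 2 (fun x => G₂ x t) 1 * t ^ k)
        (g := fun t => - w t / ε ^ 2 * t ^ k) (by
        intro t ht
        simp only [(key t ht).1]), ← intervalIntegral.integral_const_mul,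
      ← intervalIntegral.integral_sub (Continuous.intervalIntegrable (by fun_prop) _ _)
      (Continuous.intervalIntegrable (by fun_prop) _ _)]
    rw [integral_congr_open (g := fun t => (1 / ε ^ 2) * (z t * t ^ k)) (by
        intro t ht
        field_simp; ring), intervalIntegral.integral_const_mul, abs_mul,
        abs_of_pos (by positivity), one_div_mul_eq_div, div_le_iff₀ hε2]
    linarith
  · intro k _
    have hb := layer_bound hε (by norm_num) bz (pow_bd' k)
    rw [integral_congr_open (f := fun t => iteratedDeriv 3 (fun x => G₁ x t) 0 * t ^ k)
        (g := fun t => (w (1 - t) - z (1 - t)) / ε ^ 3 * t ^ k) (by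
        intro t ht
        simp only [(key t ht).2.2.2]),
      integral_congr_open (f := fun t => iteratedDeriv 2 (fun x => G₁ x t) 0 * t ^ k)
        (g := fun t => - w (1 - t) / ε ^ 2 * t ^ k) (by
        intro t ht
        simp only [(key t ht).2.2.1]), ← intervalIntegral.integral_const_mul,
      ← intervalIntegral.integral_add (Continuous.intervalIntegrable (by fun_prop) _ _)
      (Continuous.intervalIntegrable (by fun_prop) _ _)]
    rw [integral_congr_open
      (g := fun t => (-(1 / ε ^ 2)) * (z (1 - t) * (1 - (1 - t)) ^ k)) (by
        intro t ht
        simp only [sub_sub_cancel]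
        field_simp; ring), intervalIntegral.integral_const_mul,
        intervalIntegral.integral_comp_sub_left (fun t => z t * (1 - t) ^ k) 1, sub_self, sub_zero,
        abs_mul, abs_neg,
        abs_of_pos (by positivity), one_div_mul_eq_div, div_le_iff₀ hε2]
    linarith
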